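/- Let ℓ ≥ 2 and d be positive integers, and let H be a bipartite C_{2ℓ}-free graph with minimum degree at least d. Then for any vertex u of H, the number of vertices at distance at most ℓ from u is at least (d/(4ℓ))^ℓ. -/

import Mathlib

/-!
Let `Lᵢ` be the set of vertices at distance `i` from `u`. For `i < ℓ` the edges between `Lᵢ` and
`Lᵢ₊₁` form an `ℓ`-degenerate graph. Otherwise there are `A ⊆ Lᵢ` and `B ⊆ Lᵢ₊₁` such that every
vertex of `A ∪ B` has more than `ℓ` neighbours on the other side. Call two vertices of `A` siblings
if they have a common neighbour in `B`, and fix a breadth-first search tree rooted at `u`. Let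
`s + 1` be the least number of steps up the tree after which all siblings have merged. Then some
`x ∈ B` has two neighbours `y, y' ∈ A` whose ancestors `s` steps up differ. A greedy path from `x`
of length `2(ℓ - s - 1) - 1` avoiding `y` and `y'` ends at some `w ∈ A`, whose ancestor `s + 1`
steps up is that of `y` and `y'`. The ancestor of `w` after `s` steps differs from that of `y` or of
`y'`; joining `w` to that one through the tree closes a cycle of length `2ℓ`.

Degeneracy bounds the edges between consecutive layers by `ℓ(|Lᵢ| + |Lᵢ₊₁|)`. As `H` is bipartite,
the edges at `Lᵢ₊₁` go to `Lᵢ` and `Lᵢ₊₂`, so `d |Lᵢ₊₁| ≤ ℓ(|Lᵢ| + 2|Lᵢ₊₁| + |Lᵢ₊₂|)`. When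
`4ℓ ≤ d`, this recurrence makes the layers grow by a factor `d / (4ℓ)` up to radius `ℓ`.
-/

namespace EvenCycleFree

open Finset SimpleGraph

section DoubleCounting

variable {α β : Type*}

theorem lt_card_filter_erase [DecidableEq α] {p : α → Prop} [DecidablePred p] {s : Finset α} {n : ℕ}
    (h : n + 1 < #{a ∈ s | p a}) (x : α) : n < #{a ∈ s.erase x | p a} := by
  rw [filter_erase]
  have := pred_card_le_card_erase (s := {a ∈ s | p a}) (a := x)
  lia

theorem sum_card_bipartiteAbove_le_of_degenerate {r : α → β → Prop} [∀ a b, Decidable (r a b)]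
    {k : ℕ} {s : Finset α} {t : Finset β}
    (h : ∀ s' ⊆ s, ∀ t' ⊆ t, s'.Nonempty ∨ t'.Nonempty →
      (∃ a ∈ s', #(t'.bipartiteAbove r a) ≤ k) ∨ ∃ b ∈ t', #(s'.bipartiteBelow r b) ≤ k) :
    ∑ a ∈ s, #(t.bipartiteAbove r a) ≤ k * (#s + #t) := by
  classical
  induction hn : #s + #t generalizing s t with
  | zero => simp_all
  | succ n ih =>
    have hne : s.Nonempty ∨ t.Nonempty := by
      simp only [← card_pos]
      lia
    rcases h s subset_rfl t subset_rfl hne with ⟨a, ha, hak⟩ | ⟨b, hb, hbk⟩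
    · rw [← add_sum_erase _ _ ha]
      have := card_erase_add_one ha
      have := ih (s := s.erase a) (t := t)
        (fun s' hs' ↦ h s' (hs'.trans (erase_subset _ _))) (by lia)
      linarith
    · rw [sum_card_bipartiteAbove_eq_sum_card_bipartiteBelow, ← add_sum_erase _ _ hb,
        ← sum_card_bipartiteAbove_eq_sum_card_bipartiteBelow]
      have := card_erase_add_one hb
      have := ih (s := s) (t := t.erase b)
        (fun s' hs' t' ht' ↦ h s' hs' t' (ht'.trans (erase_subset _ _))) (by lia)
      linarith

end DoubleCounting

section Recurrence

theorem mul_le_apply_succ_of_recurrence {R : Type*} [CommRing R] [LinearOrder R]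
    [IsStrictOrderedRing R] {a : ℕ → R} {x : R} {n : ℕ} (ha : ∀ i, 0 ≤ a i) (hx : 1 ≤ x)
    (hzero : x * a 0 ≤ a 1)
    (hrec : ∀ i, i + 1 < n → 4 * x * a (i + 1) ≤ a i + 2 * a (i + 1) + a (i + 2)) {i : ℕ}
    (hi : i < n) : x * a i ≤ a (i + 1) := by
  induction i with
  | zero => exact hzero
  | succ i ih =>
    have := hrec i hi
    have : a i ≤ a (i + 1) := (le_mul_of_one_le_left (ha i) hx).trans (ih (by lia))
    have : a (i + 1) ≤ x * a (i + 1) := le_mul_of_one_le_left (ha (i + 1)) hx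
    linarith

end Recurrence

section Paths

variable {V : Type*} [DecidableEq V] {H : SimpleGraph V} [DecidableRel H.Adj] {A B : Finset V}

theorem exists_isPath_of_lt_card_adj (hAB : Disjoint A B) {n : ℕ}
    (hA : ∀ a ∈ A, n < #{b ∈ B | H.Adj a b}) (hB : ∀ b ∈ B, n < #{a ∈ A | H.Adj a b})
    {x : V} (hx : x ∈ B) :
    ∃ w ∈ A, ∃ P : H.Walk x w, P.IsPath ∧ P.length = 2 * n + 1 ∧ ∀ v ∈ P.support, v ∈ A ∪ B := by
  induction n generalizing A B x with
  | zero =>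
    obtain ⟨a, ha⟩ := card_pos.1 (hB x hx)
    obtain ⟨haA, hax⟩ := mem_filter.1 ha
    exact ⟨a, haA, hax.symm.toWalk, .of_adj hax.symm, rfl, by simp [haA, hx]⟩
  | succ n ih =>
    obtain ⟨a, ha⟩ := card_pos.1 ((Nat.zero_le _).trans_lt (hB x hx))
    obtain ⟨haA, hax⟩ := mem_filter.1 ha
    obtain ⟨b, hb⟩ := card_pos.1 ((Nat.zero_le _).trans_lt (lt_card_filter_erase (hA a haA) x))
    obtain ⟨hbB, hab⟩ := mem_filter.1 hb
    obtain ⟨w, hw, P, hP, hlen, hsupp⟩ := ih (A := A.erase a) (B := B.erase x)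
      (hAB.mono (erase_subset _ _) (erase_subset _ _))
      (fun a' ha' ↦ lt_card_filter_erase (hA a' (mem_of_mem_erase ha')) x)
      (fun b' hb' ↦ lt_card_filter_erase (hB b' (mem_of_mem_erase hb')) a) hbB
    have hne : a ≠ x := hax.ne
    have haB : a ∉ B := disjoint_left.1 hAB haA
    have hxA : x ∉ A := disjoint_right.1 hAB hx
    refine ⟨w, mem_of_mem_erase hw, .cons hax.symm (.cons hab P), ?_, ?_, ?_⟩
    · grind [Walk.cons_isPath_iff, Walk.support_cons]
    · simp only [Walk.length_cons]
      lia
    · grind [Walk.support_cons]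

theorem exists_isPath_avoiding_of_lt_card_adj (hAB : Disjoint A B) {n : ℕ}
    (hA : ∀ a ∈ A, n < #{b ∈ B | H.Adj a b}) (hB : ∀ b ∈ B, n + 2 < #{a ∈ A | H.Adj a b})
    {x y y' : V} (hx : x ∈ B) (hy : y ∉ B) (hy' : y' ∉ B) :
    ∃ w ∈ A, ∃ P : H.Walk x w, P.IsPath ∧ P.length = 2 * n + 1 ∧
      ∀ v ∈ P.support, v ∈ A ∪ B ∧ v ≠ y ∧ v ≠ y' := by
  have hsub : (A.erase y).erase y' ⊆ A := (erase_subset _ _).trans (erase_subset _ _)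
  obtain ⟨w, hw, P, hP, hlen, hsupp⟩ := exists_isPath_of_lt_card_adj (hAB.mono_left hsub)
    (fun a ha ↦ hA a (hsub ha))
    (fun b hb ↦ lt_card_filter_erase (lt_card_filter_erase (hB b hb) y) y') hx
  exact ⟨w, hsub hw, P, hP, hlen, by grind⟩

theorem exists_isPath_avoiding_of_eqOn_neighbors {α : Type*} {g : V → α} (hAB : Disjoint A B)
    {n : ℕ} (hA : ∀ a ∈ A, n < #{b ∈ B | H.Adj a b})
    (hB : ∀ b ∈ B, n + 2 < #{a ∈ A | H.Adj a b})
    (hg : ∀ b ∈ B, ∀ a ∈ A, ∀ a' ∈ A, H.Adj a b → H.Adj a' b → g a = g a')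
    {x y y' : V} (hx : x ∈ B) (hy : y ∈ A) (hy' : y' ∈ A) (hyx : H.Adj y x) :
    ∃ w ∈ A, g w = g y ∧ ∃ P : H.Walk x w, P.IsPath ∧ P.length = 2 * n + 1 ∧
      ∀ v ∈ P.support, v ∈ A ∪ B ∧ v ≠ y ∧ v ≠ y' := by
  classical
  -- `A'` and `B'` form a union of components of the bipartite graph between `A` and `B`.
  let A' := {a ∈ A | g a = g y}
  let B' := {b ∈ B | ∀ a ∈ A, H.Adj a b → g a = g y}
  have hA' : ∀ a ∈ A', n < #{b ∈ B' | H.Adj a b} := fun a ha ↦ by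
    obtain ⟨ha, hay⟩ := mem_filter.1 ha
    refine (hA a ha).trans_le (card_le_card fun b hb ↦ ?_)
    obtain ⟨hb, hab⟩ := mem_filter.1 hb
    exact mem_filter.2 ⟨mem_filter.2
      ⟨hb, fun a' ha' ha'b ↦ (hg b hb a' ha' a ha ha'b hab).trans hay⟩, hab⟩
  have hB' : ∀ b ∈ B', n + 2 < #{a ∈ A' | H.Adj a b} := fun b hb ↦ by
    obtain ⟨hb, hby⟩ := mem_filter.1 hb
    refine (hB b hb).trans_le (card_le_card fun a ha ↦ ?_)
    obtain ⟨ha, hab⟩ := mem_filter.1 ha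
    exact mem_filter.2 ⟨mem_filter.2 ⟨ha, hby a ha hab⟩, hab⟩
  have hAsub : A' ⊆ A := filter_subset _ _
  have hBsub : B' ⊆ B := filter_subset _ _
  have hnotMem {v : V} (hv : v ∈ A) : v ∉ B' := fun h ↦ disjoint_left.1 hAB hv (hBsub h)
  obtain ⟨w, hw, P, hP, hlen, hsupp⟩ := exists_isPath_avoiding_of_lt_card_adj
    (hAB.mono hAsub hBsub) hA' hB'
    (mem_filter.2 ⟨hx, fun a ha hax ↦ hg x hx a ha y hy hax hyx⟩) (hnotMem hy) (hnotMem hy')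
  exact ⟨w, hAsub hw, (mem_filter.1 hw).2, P, hP, hlen,
    fun v hv ↦ ⟨union_subset_union hAsub hBsub (hsupp v hv).1, (hsupp v hv).2⟩⟩

end Paths

/-- `f` sends each vertex of positive height `δ` to a neighbour one level below. The chains
`v, f v, f (f v), …` are the branches of a spanning forest; for `δ` the distance to a root it is a
breadth-first search tree. -/
structure IsParentMap {V : Type*} (H : SimpleGraph V) (δ : V → ℕ) (f : V → V) : Prop where
  adj_apply : ∀ ⦃v⦄, 0 < δ v → H.Adj v (f v)
  height_apply : ∀ ⦃v⦄, 0 < δ v → δ (f v) + 1 = δ v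

namespace IsParentMap

variable {V : Type*} {H : SimpleGraph V} {δ : V → ℕ} {f : V → V}

theorem height_iterate (hf : IsParentMap H δ f) {v : V} {t : ℕ} (ht : t ≤ δ v) :
    δ (f^[t] v) + t = δ v := by
  induction t with
  | zero => rfl
  | succ t ih =>
    rw [Function.iterate_succ_apply']
    have := ih (by lia)
    have := hf.height_apply (v := f^[t] v) (by lia)
    lia

theorem reachable_iterate (hf : IsParentMap H δ f) {v : V} {t : ℕ} (ht : t ≤ δ v) :
    H.Reachable v (f^[t] v) := by
  induction t with
  | zero => rfl
  | succ t ih =>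
    rw [Function.iterate_succ_apply']
    have := hf.height_iterate (v := v) (t := t) (by lia)
    exact (ih (by lia)).trans (hf.adj_apply (by lia)).reachable

theorem exists_isPath_of_iterate_eq (hf : IsParentMap H δ f) {y w : V} {t : ℕ}
    (hheight : δ w = δ y) (ht : t ≤ δ y) (heq : f^[t] y = f^[t] w)
    (hne : ∀ s < t, f^[s] y ≠ f^[s] w) :
    ∃ Q : H.Walk w y, Q.IsPath ∧ Q.length = 2 * t ∧
      ∀ v ∈ Q.support, δ v < δ y ∨ v = y ∨ v = w := by
  induction t generalizing y w with
  | zero =>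
    obtain rfl : y = w := heq
    exact ⟨.nil, .nil, rfl, by simp⟩
  | succ t ih =>
    have hyw : y ≠ w := hne 0 t.succ_pos
    have hy := hf.height_apply (v := y) (by lia)
    have hw := hf.height_apply (v := w) (by lia)
    obtain ⟨Q, hQ, hlen, hsupp⟩ := ih (y := f y) (w := f w) (by lia) (by lia) heq
      (fun s hs ↦ hne (s + 1) (by lia))
    have hlow : ∀ v ∈ Q.support, δ v < δ y := by grind
    refine ⟨.cons (hf.adj_apply (by lia)) (Q.concat (hf.adj_apply (by lia)).symm), ?_, ?_, ?_⟩
    · grind [Walk.cons_isPath_iff, Walk.support_concat, Walk.concat_isPath_iff]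
    · simp only [Walk.length_cons, Walk.length_concat]
      lia
    · grind [Walk.support_cons, Walk.support_concat]

theorem exists_isCycle_of_isPath (hf : IsParentMap H δ f) {y w : V} {P : H.Walk y w}
    (hP : P.IsPath) (hsupp : ∀ v ∈ P.support, δ y ≤ δ v) (hheight : δ w = δ y) {s : ℕ}
    (hs : s < δ y) (heq : f^[s + 1] y = f^[s + 1] w) (hne : f^[s] y ≠ f^[s] w) :
    ∃ (v : V) (c : H.Walk v v), c.IsCycle ∧ c.length = P.length + 2 * (s + 1) := by
  have hne_of_le : ∀ r < s + 1, f^[r] y ≠ f^[r] w := fun r hr h ↦ hne <| by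
    rw [← Nat.sub_add_cancel (Nat.lt_succ_iff.1 hr), Function.iterate_add_apply, h,
      ← Function.iterate_add_apply]
  obtain ⟨Q, hQ, hlen, hQsupp⟩ := hf.exists_isPath_of_iterate_eq hheight hs heq hne_of_le
  refine ⟨y, P.append Q, hP.isCycle_append hQ ?_ (by lia), by rw [Walk.length_append, hlen]⟩
  have hPnodup := hP.support_nodup
  have hQnodup := hQ.support_nodup
  rw [← Walk.cons_tail_support, List.nodup_cons] at hPnodup hQnodup
  intro v hvP hvQ
  have := hsupp v (List.mem_of_mem_tail hvP)
  rcases hQsupp v (List.mem_of_mem_tail hvQ) with h | rfl | rfl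
  · lia
  · exact hPnodup.1 hvP
  · exact hQnodup.1 hvQ

variable [DecidableRel H.Adj] {A B : Finset V}

theorem exists_isCycle_of_iterate_ne (hf : IsParentMap H δ f) {i ℓ s : ℕ}
    (hA : ∀ a ∈ A, δ a = i) (hB : ∀ b ∈ B, i < δ b)
    (hAdeg : ∀ a ∈ A, ℓ < #{b ∈ B | H.Adj a b}) (hBdeg : ∀ b ∈ B, ℓ < #{a ∈ A | H.Adj a b})
    (hsi : s < i) (hsℓ : s + 2 ≤ ℓ)
    (hagree : ∀ b ∈ B, ∀ a ∈ A, ∀ a' ∈ A, H.Adj a b → H.Adj a' b → f^[s + 1] a = f^[s + 1] a')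
    {x y y' : V} (hx : x ∈ B) (hy : y ∈ A) (hy' : y' ∈ A) (hyx : H.Adj y x) (hyx' : H.Adj y' x)
    (hne : f^[s] y ≠ f^[s] y') :
    ∃ (v : V) (c : H.Walk v v), c.IsCycle ∧ c.length = 2 * ℓ := by
  classical
  have hAB : Disjoint A B := disjoint_left.2 fun v hvA hvB ↦ by
    have := hA v hvA
    have := hB v hvB
    lia
  obtain ⟨w, hw, hwy, P, hP, hlen, hsupp⟩ := exists_isPath_avoiding_of_eqOn_neighbors hAB
    (n := ℓ - (s + 2)) (fun a ha ↦ (by lia : _ ≤ ℓ).trans_lt (hAdeg a ha))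
    (fun b hb ↦ (by lia : _ ≤ ℓ).trans_lt (hBdeg b hb)) hagree hx hy hy' hyx
  have hyy' := hagree x hx y hy y' hy' hyx hyx'
  obtain ⟨z, hz, hzx, hzP, hzw, hzne⟩ : ∃ z ∈ A, H.Adj z x ∧ z ∉ P.support ∧
      f^[s + 1] z = f^[s + 1] w ∧ f^[s] z ≠ f^[s] w := by
    by_cases h : f^[s] y = f^[s] w
    · exact ⟨y', hy', hyx', fun h ↦ (hsupp _ h).2.2 rfl, hyy'.symm.trans hwy.symm,
        fun h' ↦ hne (h.trans h'.symm)⟩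
    · exact ⟨y, hy, hyx, fun h ↦ (hsupp _ h).2.1 rfl, hwy.symm, h⟩
  have hzi := hA z hz
  obtain ⟨v, c, hc, hclen⟩ := hf.exists_isCycle_of_isPath (hP.cons hzP (h := hzx))
    (by grind [Walk.support_cons]) (by grind) (by lia) hzw hzne
  exact ⟨v, c, hc, by rw [hclen, Walk.length_cons]; lia⟩

theorem exists_isCycle_of_lt_card_adj (hf : IsParentMap H δ f) {i ℓ : ℕ} (hi : i < ℓ)
    (hA : ∀ a ∈ A, δ a = i) (hB : ∀ b ∈ B, i < δ b)
    (hroot : ∀ a ∈ A, ∀ a' ∈ A, f^[i] a = f^[i] a')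
    (hAdeg : ∀ a ∈ A, ℓ < #{b ∈ B | H.Adj a b}) (hBdeg : ∀ b ∈ B, ℓ < #{a ∈ A | H.Adj a b})
    (hne : B.Nonempty) :
    ∃ (v : V) (c : H.Walk v v), c.IsCycle ∧ c.length = 2 * ℓ := by
  let Agree (t : ℕ) : Prop :=
    ∀ b ∈ B, ∀ a ∈ A, ∀ a' ∈ A, H.Adj a b → H.Adj a' b → f^[t] a = f^[t] a'
  have hAgree_zero : ¬ Agree 0 := fun h ↦ by
    obtain ⟨b, hb⟩ := hne
    obtain ⟨a, ha, a', ha', haa'⟩ := one_lt_card.1 (show 1 < #{a ∈ A | H.Adj a b} by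
      have := hBdeg b hb
      lia)
    rw [mem_filter] at ha ha'
    exact haa' (h b hb a ha.1 a' ha'.1 ha.2 ha'.2)
  have hAgree_of_le {t : ℕ} (ht : i ≤ t) : Agree t := fun b _ a ha a' ha' _ _ ↦ by
    rw [← Nat.sub_add_cancel ht, Function.iterate_add_apply, hroot a ha a' ha',
      ← Function.iterate_add_apply]
  obtain ⟨s, hs, hs_succ⟩ :=
    Nat.exists_not_and_succ_of_not_zero_of_exists hAgree_zero ⟨i, hAgree_of_le le_rfl⟩
  have hsi : s < i := not_le.1 fun h ↦ hs (hAgree_of_le h)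
  simp only [Agree, not_forall] at hs
  obtain ⟨x, hx, y, hy, y', hy', hyx, hyx', hyy'⟩ := hs
  exact hf.exists_isCycle_of_iterate_ne hA hB hAdeg hBdeg hsi (by lia) hs_succ hx hy hy' hyx
    hyx' hyy'

end IsParentMap

section Distance

variable {V : Type*}

theorem exists_isParentMap_dist (H : SimpleGraph V) (u : V) :
    ∃ f, IsParentMap H (H.dist u) f := by
  have hparent (v : V) : ∃ p, 0 < H.dist u v → H.Adj v p ∧ H.dist u p + 1 = H.dist u v := by
    by_cases hpos : 0 < H.dist u v
    · obtain ⟨P, hP⟩ := (Reachable.of_dist_ne_zero hpos.ne').symm.exists_walk_length_eq_dist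
      cases P with
      | nil => simp at hpos
      | @cons _ p _ hvp P =>
        refine ⟨p, fun _ ↦ ⟨hvp, ?_⟩⟩
        rw [Walk.length_cons, dist_comm] at hP
        have := H.dist_comm ▸ dist_le P
        have := hvp.diff_dist_adj (u := u)
        lia
    · exact ⟨v, fun h ↦ absurd h hpos⟩
  choose f hf using hparent
  exact ⟨f, fun v hv ↦ (hf v hv).1, fun v hv ↦ (hf v hv).2⟩

theorem dist_eq_add_one_or_of_colorable_two {H : SimpleGraph V} (hbip : H.Colorable 2)
    {u a b : V} (ha : H.Reachable u a) (hab : H.Adj a b) :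
    H.dist u b = H.dist u a + 1 ∨ H.dist u a = H.dist u b + 1 := by
  have c : H.Coloring Bool := hbip.toColoring (by simp)
  obtain ⟨P, hP⟩ := ha.exists_walk_length_eq_dist
  obtain ⟨Q, hQ⟩ := (ha.trans hab.reachable).exists_walk_length_eq_dist
  have hparity : H.dist u b ≠ H.dist u a := fun h ↦ c.valid hab <| by
    have := c.even_length_iff_congr P
    have := c.even_length_iff_congr Q
    grind
  have := hab.diff_dist_adj (u := u)
  lia

end Distance

section Layers

variable {V : Type*} (H : SimpleGraph V) [H.LocallyFinite]

open Classical in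
/-- The vertices at distance exactly `i` from `u`. They are enumerated layer by layer, so that
local finiteness alone makes each layer a `Finset`. -/
noncomputable def layer (u : V) : ℕ → Finset V
  | 0 => {u}
  | i + 1 => {v ∈ (layer u i).biUnion fun w ↦ H.neighborFinset w | H.dist u v = i + 1}

variable {H}

theorem mem_layer {u v : V} {i : ℕ} : v ∈ layer H u i ↔ H.Reachable u v ∧ H.dist u v = i := by
  induction i generalizing v with
  | zero =>
    rw [layer, mem_singleton]
    refine ⟨?_, fun h ↦ (h.1.dist_eq_zero_iff.1 h.2).symm⟩
    rintro rfl
    exact ⟨.rfl, dist_self⟩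
  | succ i ih =>
    simp only [layer, mem_filter, mem_biUnion, mem_neighborFinset, ih]
    refine ⟨fun ⟨⟨w, hw, hwv⟩, hv⟩ ↦ ⟨hw.1.trans hwv.reachable, hv⟩, fun ⟨hr, hv⟩ ↦ ⟨?_, hv⟩⟩
    obtain ⟨f, hf⟩ := exists_isParentMap_dist H u
    have hadj := hf.adj_apply (v := v) (by lia)
    have := hf.height_apply (v := v) (by lia)
    exact ⟨f v, ⟨hr.trans hadj.reachable, by lia⟩, hadj.symm⟩

theorem sum_card_bipartiteAbove_layer_le [DecidableRel H.Adj] {ℓ i : ℕ}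
    (hfree : ∀ (v : V) (w : H.Walk v v), w.IsCycle → w.length ≠ 2 * ℓ) (hi : i < ℓ) (u : V) :
    ∑ v ∈ layer H u i, #((layer H u (i + 1)).bipartiteAbove H.Adj v) ≤
      ℓ * (#(layer H u i) + #(layer H u (i + 1))) := by
  classical
  refine sum_card_bipartiteAbove_le_of_degenerate fun A hA B hB hne ↦ ?_
  by_contra! ⟨hAdeg, hBdeg⟩
  obtain ⟨f, hf⟩ := exists_isParentMap_dist H u
  have hA_mem (a : V) (ha : a ∈ A) := mem_layer.1 (hA ha)
  have hroot (a : V) (ha : a ∈ A) : u = f^[i] a := by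
    obtain ⟨hr, hdist⟩ := hA_mem a ha
    have := hf.height_iterate (v := a) hdist.ge
    exact ((hr.trans (hf.reachable_iterate hdist.ge)).dist_eq_zero_iff).1 (by lia)
  have hBne : B.Nonempty := hne.elim (fun ⟨a, ha⟩ ↦
    (card_pos.1 ((Nat.zero_le _).trans_lt (hAdeg a ha))).mono (filter_subset _ _)) id
  obtain ⟨v, c, hc, hlen⟩ := hf.exists_isCycle_of_lt_card_adj hi (fun a ha ↦ (hA_mem a ha).2)
    (fun b hb ↦ by have := mem_layer.1 (hB hb); lia)
    (fun a ha a' ha' ↦ (hroot a ha).symm.trans (hroot a' ha')) hAdeg hBdeg hBne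
  exact hfree v c hc hlen

theorem degree_le_card_bipartiteBelow_add_card_bipartiteAbove [DecidableRel H.Adj]
    (hbip : H.Colorable 2) {u v : V} {i : ℕ} (hv : v ∈ layer H u (i + 1)) :
    H.degree v ≤ #((layer H u i).bipartiteBelow H.Adj v) +
      #((layer H u (i + 2)).bipartiteAbove H.Adj v) := by
  classical
  refine (card_le_card fun w hw ↦ ?_).trans (card_union_le _ _)
  rw [mem_neighborFinset] at hw
  obtain ⟨hr, hdist⟩ := mem_layer.1 hv
  simp only [mem_union, mem_bipartiteBelow, mem_bipartiteAbove, mem_layer]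
  rcases dist_eq_add_one_or_of_colorable_two hbip hr hw with h | h
  · exact .inr ⟨⟨hr.trans hw.reachable, by lia⟩, hw⟩
  · exact .inl ⟨⟨hr.trans hw.reachable, by lia⟩, hw.symm⟩

theorem mul_card_layer_succ_le {ℓ d i : ℕ} (hbip : H.Colorable 2)
    (hfree : ∀ (v : V) (w : H.Walk v v), w.IsCycle → w.length ≠ 2 * ℓ)
    (hdeg : ∀ v, d ≤ H.degree v) (hi : i + 1 < ℓ) (u : V) :
    d * #(layer H u (i + 1)) ≤
      ℓ * (#(layer H u i) + 2 * #(layer H u (i + 1)) + #(layer H u (i + 2))) := by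
  classical
  calc d * #(layer H u (i + 1))
    _ = ∑ _v ∈ layer H u (i + 1), d := by rw [sum_const, smul_eq_mul, mul_comm]
    _ ≤ ∑ v ∈ layer H u (i + 1), (#((layer H u i).bipartiteBelow H.Adj v) +
          #((layer H u (i + 2)).bipartiteAbove H.Adj v)) := sum_le_sum fun v hv ↦
        (hdeg v).trans (degree_le_card_bipartiteBelow_add_card_bipartiteAbove hbip hv)
    _ = ∑ v ∈ layer H u i, #((layer H u (i + 1)).bipartiteAbove H.Adj v) +
          ∑ v ∈ layer H u (i + 1), #((layer H u (i + 2)).bipartiteAbove H.Adj v) := by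
        rw [sum_add_distrib, ← sum_card_bipartiteAbove_eq_sum_card_bipartiteBelow]
    _ ≤ ℓ * (#(layer H u i) + #(layer H u (i + 1))) +
          ℓ * (#(layer H u (i + 1)) + #(layer H u (i + 2))) :=
        add_le_add (sum_card_bipartiteAbove_layer_le hfree (by lia) u)
          (sum_card_bipartiteAbove_layer_le hfree hi u)
    _ = _ := by ring

theorem degree_le_card_layer_one (u : V) : H.degree u ≤ #(layer H u 1) :=
  card_le_card fun _ hv ↦ by
    rw [mem_neighborFinset] at hv
    exact mem_layer.2 ⟨hv.reachable, dist_eq_one_iff_adj.2 hv⟩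

theorem pow_le_card_layer {ℓ d : ℕ} (hℓ : 0 < ℓ) (hbip : H.Colorable 2)
    (hfree : ∀ (v : V) (w : H.Walk v v), w.IsCycle → w.length ≠ 2 * ℓ)
    (hdeg : ∀ v, d ≤ H.degree v) (hd : 4 * ℓ ≤ d) (u : V) :
    ((d : ℝ) / (4 * ℓ)) ^ ℓ ≤ #(layer H u ℓ) := by
  have hℓ' : 1 ≤ (ℓ : ℝ) := by exact_mod_cast hℓ
  have hd' : 4 * (ℓ : ℝ) ≤ d := by exact_mod_cast hd
  have hx : 1 ≤ (d : ℝ) / (4 * ℓ) := (one_le_div (by positivity)).2 hd'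
  set x : ℝ := d / (4 * ℓ) with hx_def
  have hxd : (d : ℝ) = ℓ * (4 * x) := by rw [hx_def]; field_simp
  have hgrowth : ∀ i < ℓ, x * #(layer H u i) ≤ #(layer H u (i + 1)) := fun i hi ↦ by
    refine mul_le_apply_succ_of_recurrence (a := fun i ↦ (#(layer H u i) : ℝ)) (n := ℓ)
      (fun _ ↦ Nat.cast_nonneg _) hx ?_ (fun j hj ↦ ?_) hi
    · have hfirst : (d : ℝ) ≤ #(layer H u 1) := by
        exact_mod_cast (hdeg u).trans (degree_le_card_layer_one u)
      have hxled : x ≤ d := div_le_self d.cast_nonneg (by linarith)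
      simpa [layer] using hxled.trans hfirst
    · have hstep : (d : ℝ) * #(layer H u (j + 1)) ≤
          ℓ * (#(layer H u j) + 2 * #(layer H u (j + 1)) + #(layer H u (j + 2))) := by
        exact_mod_cast mul_card_layer_succ_le hbip hfree hdeg hj u
      rw [hxd, mul_assoc] at hstep
      exact le_of_mul_le_mul_left hstep (by positivity)
  have := geom_le (u := fun i ↦ (#(layer H u i) : ℝ)) (c := x) (by linarith) ℓ hgrowth
  simpa [layer] using this

theorem finite_setOf_dist_le (u : V) (n : ℕ) : {v | H.Reachable u v ∧ H.dist u v ≤ n}.Finite := by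
  classical
  refine ((range (n + 1)).biUnion (layer H u)).finite_toSet.subset fun v ⟨hr, hv⟩ ↦ ?_
  rw [mem_coe, mem_biUnion]
  exact ⟨H.dist u v, by simpa [Nat.lt_succ_iff] using hv, mem_layer.2 ⟨hr, rfl⟩⟩

end Layers

end EvenCycleFree

theorem stmt_9_general {V : Type*} (H : SimpleGraph V) [H.LocallyFinite] {ℓ d : ℕ} (hℓ : 0 < ℓ)
    (hbip : H.Colorable 2)
    (hfree : ∀ (v : V) (w : H.Walk v v), w.IsCycle → w.length ≠ 2 * ℓ)
    (hdeg : ∀ v : V, d ≤ H.degree v) (u : V) :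
    ((d : ℝ) / (4 * ℓ)) ^ ℓ ≤ (({v | H.Reachable u v ∧ H.dist u v ≤ ℓ}).ncard : ℝ) := by
  rcases le_total (4 * ℓ) d with hd | hd
  · refine (EvenCycleFree.pow_le_card_layer hℓ hbip hfree hdeg hd u).trans ?_
    rw [← Set.ncard_coe_finset]
    exact_mod_cast Set.ncard_le_ncard
      (fun v hv ↦ (EvenCycleFree.mem_layer.1 hv).imp_right Eq.le)
      (EvenCycleFree.finite_setOf_dist_le u ℓ)
  · have hd' : (d : ℝ) ≤ 4 * ℓ := by exact_mod_cast hd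
    refine (pow_le_one₀ (by positivity) (div_le_one_of_le₀ hd' (by positivity))).trans ?_
    have hu : {v | H.Reachable u v ∧ H.dist u v ≤ ℓ}.Nonempty := ⟨u, .rfl, by simp⟩
    exact_mod_cast (Set.ncard_pos (EvenCycleFree.finite_setOf_dist_le u ℓ)).2 hu

/-- Let `ℓ ≥ 2`, `d ≥ 1` and let `H` be a bipartite `C_{2ℓ}`-free graph with minimum degree
at least `d`. Then for any vertex `u`, the number of vertices at distance at most `ℓ`
from `u` is at least `(d/(4ℓ))^ℓ`. -/
theorem stmt_9 {V : Type*} [Fintype V] (H : SimpleGraph V) (ℓ d : ℕ)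
    (hℓ : 2 ≤ ℓ) (hd : 1 ≤ d) (hbip : H.Colorable 2)
    (hfree : ∀ (v : V) (w : H.Walk v v), w.IsCycle → w.length ≠ 2 * ℓ)
    (hdeg : ∀ v : V, d ≤ (H.neighborSet v).ncard) :
    ∀ u : V,
      ((d : ℝ) / (4 * ℓ)) ^ ℓ ≤ (({v | H.Reachable u v ∧ H.dist u v ≤ ℓ}).ncard : ℝ) := by
  classical
  exact stmt_9_general H (by lia) hbip hfree fun v ↦
    (hdeg v).trans_eq (Set.ncard_eq_toFinset_card' _)
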